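/- The infinite series identity 165π/(4√3) = Σ_{k=0}^{∞} (1/4)^k · [(5/6)_k (5/3)_k] / [(17/12)_k (23/12)_k] · (108k² + 174k + 71) / ((k + 1)(6k + 1)) holds, where the sum is over natural numbers k and all quantities are real numbers. -/

import Mathlib

noncomputable def risingFactorial (a : ℝ) (k : ℕ) : ℝ := ∏ i ∈ Finset.range k, (a + i)

/-!
Write `Ω(a, b; c, d) = ∑ₙ (a)ₙ (b)ₙ / ((c)ₙ (d)ₙ)`, whose terms decay like `n ^ (a + b - c - d)`.
Gosper summation in `n` gives a contiguity relation
`Ω(a, b; c, d) = R(c, d) + W(c, d) Ω(a, b; c + 1, d + 1)` with rational `R` and `W`, and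
`W(c + k, d + k) → 1 / 4`: iterating it turns `Ω` into a series of ratio `1 / 4`. For
`(a, b; c, d) = (1, 1/3; 2, 7/6)` this is, up to the factor `55`, the series to be summed.

The same device with only `d` shifted turns `Ω(1, 2x; 2, 1 + x)` into the partial fraction
expansion of the cotangent, so that `(1 - 2x) Ω(1, 2x; 2, 1 + x) = π x cot (π x)`; take `x = 1 / 6`.
-/

open Filter Topology

section Telescoping

lemma hasSum_sub_succ {u : ℕ → ℝ} (hu : Summable u) :
    HasSum (fun k ↦ u k - u (k + 1)) (u 0) := by
  have hu' := (summable_nat_add_iff 1).2 hu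
  simpa only [hu.tsum_eq_zero_add, add_sub_cancel_right] using hu.hasSum.sub hu'.hasSum

lemma tendsto_sum_range_sub_succ {u : ℕ → ℝ} (hu : Tendsto u atTop (𝓝 0)) :
    Tendsto (fun N ↦ ∑ k ∈ Finset.range N, (u k - u (k + 1))) atTop (𝓝 (u 0)) := by
  simp_rw [Finset.sum_range_sub']
  simpa using hu.const_sub (u 0)

lemma tsum_eq_of_eq_sub_succ {f G : ℕ → ℝ} (hf : Summable f) (hG : Tendsto G atTop (𝓝 0))
    (hfG : ∀ n, f n = G n - G (n + 1)) : ∑' n, f n = G 0 := by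
  refine tendsto_nhds_unique hf.hasSum.tendsto_sum_nat ?_
  simpa only [hfG] using tendsto_sum_range_sub_succ hG

end Telescoping

section RisingFactorial

@[simp]
lemma risingFactorial_zero (a : ℝ) : risingFactorial a 0 = 1 := by
  simp [risingFactorial]

lemma risingFactorial_succ (a : ℝ) (n : ℕ) :
    risingFactorial a (n + 1) = risingFactorial a n * (a + n) :=
  Finset.prod_range_succ _ n

lemma risingFactorial_pos {a : ℝ} (ha : 0 < a) (n : ℕ) : 0 < risingFactorial a n :=
  Finset.prod_pos fun _ _ ↦ by positivity

lemma risingFactorial_le_risingFactorial {a b : ℝ} (ha : 0 < a) (hab : a ≤ b) (n : ℕ) :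
    risingFactorial a n ≤ risingFactorial b n :=
  Finset.prod_le_prod (fun _ _ ↦ by positivity) fun _ _ ↦ by linarith

lemma risingFactorial_add_one_mul (a : ℝ) (n : ℕ) :
    risingFactorial (a + 1) n * a = risingFactorial a n * (a + n) := by
  induction n with
  | zero => simp
  | succ n ih =>
    simp only [risingFactorial_succ, Nat.cast_succ]
    linear_combination (a + 1 + n) * ih

lemma risingFactorial_add_one {a : ℝ} (ha : a ≠ 0) (n : ℕ) :
    risingFactorial (a + 1) n = risingFactorial a n * ((a + n) / a) := by
  rw [← mul_div_assoc, eq_div_iff ha, risingFactorial_add_one_mul]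

lemma risingFactorial_two_mul (a : ℝ) (n : ℕ) :
    risingFactorial a (2 * n) =
      4 ^ n * risingFactorial (a / 2) n * risingFactorial ((a + 1) / 2) n := by
  induction n with
  | zero => simp
  | succ n ih =>
    simp only [Nat.mul_succ, risingFactorial_succ, ih, Nat.cast_add, Nat.cast_mul, Nat.cast_one,
      Nat.cast_ofNat]
    ring

lemma risingFactorial_succ_eq_div_gammaSeq (a : ℝ) {n : ℕ} (hn : 0 < n) :
    risingFactorial a (n + 1) = (n : ℝ) ^ a * n.factorial / Real.GammaSeq a n := by
  rw [Real.GammaSeq, ← risingFactorial, div_div_cancel₀ (by positivity)]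

end RisingFactorial

/-- The `n`-th term of the hypergeometric series `₃F₂(1, a, b; c, d; 1)`. -/
noncomputable def hypergeomTerm (a b c d : ℝ) (n : ℕ) : ℝ :=
  risingFactorial a n * risingFactorial b n / (risingFactorial c n * risingFactorial d n)

/-- The hypergeometric value `₃F₂(1, a, b; c, d; 1)`, meaningful for `a + b + 1 < c + d`. -/
noncomputable def hypergeomSum (a b c d : ℝ) : ℝ := ∑' n, hypergeomTerm a b c d n

section HypergeomTerm

variable {a b c d : ℝ}

@[simp]
lemma hypergeomTerm_zero : hypergeomTerm a b c d 0 = 1 := by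
  simp [hypergeomTerm]

lemma hypergeomTerm_succ (n : ℕ) :
    hypergeomTerm a b c d (n + 1) =
      hypergeomTerm a b c d n * ((a + n) * (b + n) / ((c + n) * (d + n))) := by
  simp only [hypergeomTerm, risingFactorial_succ, div_mul_div_comm]
  ring

lemma hypergeomTerm_add_one_right (hd : d ≠ 0) (n : ℕ) :
    hypergeomTerm a b c (d + 1) n = hypergeomTerm a b c d n * (d / (d + n)) := by
  simp only [hypergeomTerm, risingFactorial_add_one hd, div_mul_eq_div_div, div_div_eq_mul_div]
  ring

lemma hypergeomTerm_add_one_left (hc : c ≠ 0) (n : ℕ) :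
    hypergeomTerm a b (c + 1) d n = hypergeomTerm a b c d n * (c / (c + n)) := by
  simp only [hypergeomTerm, risingFactorial_add_one hc, div_mul_eq_div_div, div_div_eq_mul_div]
  ring

lemma hypergeomTerm_pos (ha : 0 < a) (hb : 0 < b) (hc : 0 < c) (hd : 0 < d) (n : ℕ) :
    0 < hypergeomTerm a b c d n :=
  div_pos (mul_pos (risingFactorial_pos ha n) (risingFactorial_pos hb n))
    (mul_pos (risingFactorial_pos hc n) (risingFactorial_pos hd n))

lemma hypergeomTerm_le_hypergeomTerm (ha : 0 < a) (hb : 0 < b) (hc : 0 < c) (hd : 0 < d)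
    {c' d' : ℝ} (hcc' : c ≤ c') (hdd' : d ≤ d') (n : ℕ) :
    hypergeomTerm a b c' d' n ≤ hypergeomTerm a b c d n := by
  have hA := risingFactorial_pos ha n
  have hB := risingFactorial_pos hb n
  have hC := risingFactorial_pos hc n
  have hD := risingFactorial_pos hd n
  unfold hypergeomTerm
  gcongr
  · exact (risingFactorial_pos (hc.trans_le hcc') n).le
  · exact risingFactorial_le_risingFactorial hc hcc' n
  · exact risingFactorial_le_risingFactorial hd hdd' n

lemma tendsto_rpow_mul_hypergeomTerm (ha : 0 < a) (hb : 0 < b) :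
    Tendsto (fun n : ℕ ↦ (n : ℝ) ^ (c + d - a - b) * hypergeomTerm a b c d (n + 1)) atTop
      (𝓝 (Real.Gamma c * Real.Gamma d / (Real.Gamma a * Real.Gamma b))) := by
  have hΓ := Real.GammaSeq_tendsto_Gamma
  have hne : Real.Gamma a * Real.Gamma b ≠ 0 :=
    (mul_pos (Real.Gamma_pos_of_pos ha) (Real.Gamma_pos_of_pos hb)).ne'
  refine (((hΓ c).mul (hΓ d)).div ((hΓ a).mul (hΓ b)) hne).congr' ?_
  filter_upwards [eventually_gt_atTop 0] with n hn
  have hn' : (0 : ℝ) < n := Nat.cast_pos.2 hn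
  simp only [hypergeomTerm, risingFactorial_succ_eq_div_gammaSeq, hn,
    Real.rpow_sub hn', Real.rpow_add hn', Pi.div_apply]
  field_simp

lemma summable_hypergeomTerm (ha : 0 < a) (hb : 0 < b)
    (habcd : a + b + 1 < c + d) : Summable (hypergeomTerm a b c d) := by
  refine (summable_nat_add_iff 1).1 ?_
  have hrpow : Summable fun n : ℕ ↦ (n : ℝ) ^ (-(c + d - a - b)) :=
    Real.summable_nat_rpow.2 (by linarith)
  refine summable_of_isBigO_nat hrpow ?_
  have hO := ((tendsto_rpow_mul_hypergeomTerm (c := c) (d := d) ha hb).isBigO_one ℝ).mul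
    (Asymptotics.isBigO_refl (fun n : ℕ ↦ (n : ℝ) ^ (-(c + d - a - b))) atTop)
  refine hO.congr' ?_ (by simp)
  filter_upwards [eventually_gt_atTop 0] with n hn
  have hn' : (0 : ℝ) < n := Nat.cast_pos.2 hn
  rw [mul_right_comm, ← Real.rpow_add hn', add_neg_cancel, Real.rpow_zero, one_mul]

lemma tendsto_natCast_mul_hypergeomTerm (ha : 0 < a) (hb : 0 < b)
    (habcd : a + b + 1 < c + d) :
    Tendsto (fun n : ℕ ↦ (n : ℝ) * hypergeomTerm a b c d n) atTop (𝓝 0) := by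
  have hzero := (summable_hypergeomTerm ha hb habcd).tendsto_atTop_zero.comp
    (tendsto_add_atTop_nat 1)
  have hrpow : Tendsto (fun n : ℕ ↦ (n : ℝ) ^ (-(c + d - a - b - 1))) atTop (𝓝 0) :=
    (tendsto_rpow_neg_atTop (by linarith)).comp tendsto_natCast_atTop_atTop
  have hmul := (hrpow.mul (tendsto_rpow_mul_hypergeomTerm (c := c) (d := d) ha hb)).add hzero
  rw [zero_mul, add_zero] at hmul
  refine (tendsto_add_atTop_iff_nat 1).1 (hmul.congr' ?_)
  filter_upwards [eventually_gt_atTop 0] with n hn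
  have hn' : (0 : ℝ) < n := Nat.cast_pos.2 hn
  rw [← mul_assoc, ← Real.rpow_add hn', show -(c + d - a - b - 1) + (c + d - a - b) = 1 by ring,
    Real.rpow_one, Function.comp_apply, Nat.cast_succ, add_mul, one_mul]

lemma tendsto_linear_mul_hypergeomTerm (ha : 0 < a) (hb : 0 < b)
    (habcd : a + b + 1 < c + d) (p q : ℝ) :
    Tendsto (fun n : ℕ ↦ (p * n + q) * hypergeomTerm a b c d n) atTop (𝓝 0) := by
  have hlin := ((tendsto_natCast_mul_hypergeomTerm ha hb habcd).const_mul p).add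
    ((summable_hypergeomTerm ha hb habcd).tendsto_atTop_zero.const_mul q)
  simpa only [mul_zero, add_zero, add_mul, mul_assoc] using hlin

lemma hypergeomSum_nonneg (ha : 0 < a) (hb : 0 < b) (hc : 0 < c) (hd : 0 < d) :
    0 ≤ hypergeomSum a b c d :=
  tsum_nonneg fun n ↦ (hypergeomTerm_pos ha hb hc hd n).le

lemma hypergeomSum_le_hypergeomSum (ha : 0 < a) (hb : 0 < b) (hc : 0 < c) (hd : 0 < d)
    (habcd : a + b + 1 < c + d) {c' d' : ℝ} (hcc' : c ≤ c') (hdd' : d ≤ d') :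
    hypergeomSum a b c' d' ≤ hypergeomSum a b c d :=
  (summable_hypergeomTerm ha hb (by linarith)).tsum_le_tsum
    (hypergeomTerm_le_hypergeomTerm ha hb hc hd hcc' hdd')
    (summable_hypergeomTerm ha hb habcd)

end HypergeomTerm

section Acceleration

/-- The factor `W` in the contiguity relation
`Ω(a, b; c, d) = R + W Ω(a, b; c + 1, d + 1)` for `Ω = hypergeomSum`. -/
noncomputable def contiguousFactor (a b c d : ℝ) : ℝ :=
  (c - a) * (c - b) * ((d - a) * (d - b)) /
    (c * d * ((c + d - a - b - 1) * (c + d - a - b)))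

/-- The inhomogeneous term `R` in the contiguity relation
`Ω(a, b; c, d) = R + W Ω(a, b; c + 1, d + 1)` for `Ω = hypergeomSum`. -/
noncomputable def contiguousRemainder (a b c d : ℝ) : ℝ :=
  (c ^ 2 + c * d + d ^ 2 - (1 + a + b) * (c + d) + a + b + a * b) /
    ((c + d - a - b - 1) * (c + d - a - b))

/-- The coefficient of `Ω(a, b; c + k, d + k)` after `k` applications of the contiguity relation
to `Ω(a, b; c, d)`. -/
noncomputable def contiguousWeight (a b c d : ℝ) (k : ℕ) : ℝ :=
  ∏ i ∈ Finset.range k, contiguousFactor a b (c + i) (d + i)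

variable {a b c d : ℝ}

-- The certificate comes from Gosper's algorithm, with the ansatz (linear in `n`) * (`n`-th term).
lemma hypergeomTerm_sub_contiguousFactor_mul (hc : 0 < c) (hd : 0 < d)
    (habcd : a + b + 1 < c + d) (n : ℕ) :
    hypergeomTerm a b c d n - contiguousFactor a b c d * hypergeomTerm a b (c + 1) (d + 1) n =
      (1 / (c + d - a - b - 1) * n + contiguousRemainder a b c d) * hypergeomTerm a b c d n -
        (1 / (c + d - a - b - 1) * (n + 1 : ℕ) + contiguousRemainder a b c d) *
          hypergeomTerm a b c d (n + 1) := by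
  have hs : c + d - a - b - 1 ≠ 0 := by linarith
  have hs' : c + d - a - b ≠ 0 := by linarith
  rw [hypergeomTerm_succ, hypergeomTerm_add_one_right hd.ne', hypergeomTerm_add_one_left hc.ne']
  unfold contiguousFactor contiguousRemainder
  push_cast
  field_simp
  ring

lemma hypergeomSum_eq_contiguousRemainder_add (ha : 0 < a) (hb : 0 < b) (hc : 0 < c) (hd : 0 < d)
    (habcd : a + b + 1 < c + d) :
    hypergeomSum a b c d =
      contiguousRemainder a b c d +
        contiguousFactor a b c d * hypergeomSum a b (c + 1) (d + 1) := by
  have hsum := summable_hypergeomTerm ha hb habcd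
  have hsum' := (summable_hypergeomTerm ha hb (c := c + 1) (d := d + 1) (by linarith)).mul_left
    (contiguousFactor a b c d)
  have htel := tsum_eq_of_eq_sub_succ (hsum.sub hsum')
    (tendsto_linear_mul_hypergeomTerm ha hb habcd _ _)
    (hypergeomTerm_sub_contiguousFactor_mul hc hd habcd)
  rw [hsum.tsum_sub hsum', tsum_mul_left, hypergeomTerm_zero] at htel
  simpa [hypergeomSum, sub_eq_iff_eq_add] using htel

lemma contiguousWeight_succ (k : ℕ) :
    contiguousWeight a b c d (k + 1) =
      contiguousWeight a b c d k * contiguousFactor a b (c + k) (d + k) :=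
  Finset.prod_range_succ _ k

lemma contiguousWeight_eq (a b c d : ℝ) (k : ℕ) :
    contiguousWeight a b c d k =
      risingFactorial (c - a) k * risingFactorial (c - b) k *
          (risingFactorial (d - a) k * risingFactorial (d - b) k) /
        (risingFactorial c k * risingFactorial d k *
          risingFactorial (c + d - a - b - 1) (2 * k)) := by
  induction k with
  | zero => simp [contiguousWeight]
  | succ k ih =>
    simp only [contiguousWeight_succ, ih, contiguousFactor, Nat.mul_succ, risingFactorial_succ]
    rw [div_mul_div_comm]
    push_cast
    ring_nf

lemma tendsto_contiguousFactor (a b c d : ℝ) :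
    Tendsto (fun k : ℕ ↦ contiguousFactor a b (c + k) (d + k)) atTop (𝓝 (1 / 4)) := by
  have hquot (p q r : ℝ) (hr : r ≠ 0) := tendsto_add_mul_div_add_mul_atTop_nhds p q 1 hr
  have hlim := ((hquot (c - a) c 1 one_ne_zero).mul (hquot (d - a) d 1 one_ne_zero)).mul
    ((hquot (c - b) (c + d - a - b - 1) 2 two_ne_zero).mul
      (hquot (d - b) (c + d - a - b) 2 two_ne_zero))
  refine (hlim.congr fun k ↦ ?_).trans_eq (by norm_num)
  simp only [contiguousFactor, div_mul_div_comm]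
  ring_nf

lemma summable_contiguousWeight (a b c d : ℝ) : Summable (contiguousWeight a b c d) := by
  refine summable_of_ratio_norm_eventually_le (r := 1 / 2) (by norm_num) ?_
  have hnorm := (tendsto_contiguousFactor a b c d).norm
  filter_upwards [hnorm.eventually_le_const (u := 1 / 2) (by norm_num)] with k hk
  rw [contiguousWeight_succ, norm_mul, mul_comm]
  gcongr

theorem hasSum_contiguousWeight_mul_contiguousRemainder (ha : 0 < a) (hb : 0 < b) (hc : 0 < c)
    (hd : 0 < d) (habcd : a + b + 1 < c + d) :
    HasSum (fun k : ℕ ↦ contiguousWeight a b c d k * contiguousRemainder a b (c + k) (d + k))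
      (hypergeomSum a b c d) := by
  set Ω : ℕ → ℝ := fun k ↦ hypergeomSum a b (c + k) (d + k)
  have hΩ_le (k : ℕ) : ‖Ω k‖ ≤ hypergeomSum a b c d := by
    rw [Real.norm_of_nonneg (hypergeomSum_nonneg ha hb (by positivity) (by positivity))]
    exact hypergeomSum_le_hypergeomSum ha hb hc hd habcd (by simp) (by simp)
  have hsum : Summable fun k ↦ contiguousWeight a b c d k * Ω k := by
    refine ((summable_contiguousWeight a b c d).norm.mul_right
      (hypergeomSum a b c d)).of_norm_bounded fun k ↦ ?_
    rw [norm_mul]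
    gcongr
    exact hΩ_le k
  convert hasSum_sub_succ hsum using 1
  · ext k
    have hstep := hypergeomSum_eq_contiguousRemainder_add ha hb (c := c + k) (d := d + k)
      (by positivity) (by positivity) (by linarith [k.cast_nonneg (α := ℝ)])
    simp only [Ω, contiguousWeight_succ, hstep, Nat.cast_succ, ← add_assoc]
    ring
  · simp [Ω, contiguousWeight]

end Acceleration

section Cotangent

open Real

variable {b x : ℝ}

lemma hypergeomTerm_div_sub_div (hx : 0 < x) (hbx : b < 1 + x) (n : ℕ) :
    hypergeomTerm 1 b 2 (1 + x) n / x - hypergeomTerm 1 b 2 (1 + (x + 1)) n / (x + 1) =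
      (1 / (x * (1 + x - b)) * n + 1 / (x * (1 + x - b))) * hypergeomTerm 1 b 2 (1 + x) n -
        (1 / (x * (1 + x - b)) * (n + 1 : ℕ) + 1 / (x * (1 + x - b))) *
          hypergeomTerm 1 b 2 (1 + x) (n + 1) := by
  have hxb : 1 + x - b ≠ 0 := by linarith
  rw [hypergeomTerm_succ, ← add_assoc, hypergeomTerm_add_one_right (by positivity)]
  push_cast
  field_simp
  ring

lemma hypergeomSum_div_eq_add (hb : 0 < b) (hx : 0 < x) (hbx : b < 1 + x) :
    hypergeomSum 1 b 2 (1 + x) / x =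
      1 / (x * (1 + x - b)) + hypergeomSum 1 b 2 (1 + (x + 1)) / (x + 1) := by
  have hsum := summable_hypergeomTerm one_pos hb (c := 2) (d := 1 + x) (by linarith)
  have hsum' := summable_hypergeomTerm one_pos hb (c := 2) (d := 1 + (x + 1)) (by linarith)
  have htel := tsum_eq_of_eq_sub_succ ((hsum.div_const x).sub (hsum'.div_const (x + 1)))
    (tendsto_linear_mul_hypergeomTerm one_pos hb (by linarith) _ _)
    (hypergeomTerm_div_sub_div hx hbx)
  rw [(hsum.div_const x).tsum_sub (hsum'.div_const (x + 1)), tsum_div_const, tsum_div_const,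
    hypergeomTerm_zero] at htel
  simpa [hypergeomSum, sub_eq_iff_eq_add] using htel

lemma tendsto_sum_one_div_add_mul_add (hb : 0 < b) (hx : 0 < x) (hbx : b < 1 + x) :
    Tendsto (fun N ↦ ∑ j ∈ Finset.range N, 1 / ((x + j) * (1 + (x + j) - b))) atTop
      (𝓝 (hypergeomSum 1 b 2 (1 + x) / x)) := by
  set u : ℕ → ℝ := fun j ↦ hypergeomSum 1 b 2 (1 + (x + j)) / (x + j)
  have hatTop : Tendsto (fun j : ℕ ↦ x + (j : ℝ)) atTop atTop :=
    tendsto_atTop_add_const_left _ _ tendsto_natCast_atTop_atTop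
  have hu : Tendsto u atTop (𝓝 0) := by
    refine squeeze_zero (fun j ↦ ?_) (fun j ↦ ?_)
      (hatTop.const_div_atTop (hypergeomSum 1 b 2 (1 + x)))
    · exact div_nonneg (hypergeomSum_nonneg one_pos hb two_pos (by positivity)) (by positivity)
    · simp only [u]
      gcongr
      exact hypergeomSum_le_hypergeomSum one_pos hb two_pos (by positivity) (by linarith) le_rfl
        (by simp)
  have hsum := tendsto_sum_range_sub_succ hu
  simp only [u, Nat.cast_zero, add_zero, Nat.cast_succ, ← add_assoc x] at hsum
  refine hsum.congr fun N ↦ Finset.sum_congr rfl fun j _ ↦ ?_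
  rw [hypergeomSum_div_eq_add hb (by positivity) (by linarith [j.cast_nonneg (α := ℝ)]),
    add_sub_cancel_right]

lemma tendsto_sum_cotTerm_ofReal (hx : (x : ℂ) ∈ Complex.integerComplement) :
    Tendsto (fun N ↦ ∑ j ∈ Finset.range N, (1 / (x - (j + 1)) + 1 / (x + (j + 1)))) atTop
      (𝓝 (π * cot (π * x) - 1 / x)) := by
  rw [← tendsto_ofReal_iff]
  simpa [cotTerm] using tendsto_logDeriv_euler_cot_sub hx

lemma tendsto_sum_one_div_sub_one_div (hx : (x : ℂ) ∈ Complex.integerComplement) :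
    Tendsto (fun N ↦ ∑ j ∈ Finset.range N, (1 / (x + j) - 1 / (j + 1 - x))) atTop
      (𝓝 (π * cot (π * x))) := by
  have htail : Tendsto (fun N : ℕ ↦ 1 / (x + N)) atTop (𝓝 0) :=
    (tendsto_atTop_add_const_left _ _ tendsto_natCast_atTop_atTop).const_div_atTop 1
  have hlim := ((tendsto_sum_cotTerm_ofReal hx).add_const (1 / x)).sub htail
  rw [sub_add_cancel, sub_zero] at hlim
  refine hlim.congr fun N ↦ ?_
  have htel := Finset.sum_range_sub' (fun j : ℕ ↦ 1 / (x + j)) N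
  have hneg (j : ℕ) : 1 / (x - (j + 1)) = -(1 / (j + 1 - x)) := by
    rw [← neg_sub, one_div_neg_eq_neg_one_div]
  simp only [Finset.sum_add_distrib, Finset.sum_sub_distrib, hneg, Finset.sum_neg_distrib,
    Nat.cast_succ, Nat.cast_zero, add_zero] at htel ⊢
  linear_combination -htel

lemma ofReal_mem_integerComplement (hx₀ : 0 < x) (hx₁ : x < 1) :
    (x : ℂ) ∈ Complex.integerComplement := by
  rintro ⟨m, hm⟩
  obtain rfl : (m : ℝ) = x := by exact_mod_cast hm
  norm_cast at hx₀ hx₁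
  omega

theorem one_sub_two_mul_hypergeomSum (hx₀ : 0 < x) (hx₁ : x < 1) :
    (1 - 2 * x) * hypergeomSum 1 (2 * x) 2 (1 + x) = π * x * cot (π * x) := by
  have hsum := (tendsto_sum_one_div_add_mul_add (b := 2 * x) (by positivity) hx₀
    (by linarith)).const_mul (1 - 2 * x)
  have hcot := tendsto_sum_one_div_sub_one_div (ofReal_mem_integerComplement hx₀ hx₁)
  have hpartialFractions (j : ℕ) : (1 - 2 * x) * (1 / ((x + j) * (1 + (x + j) - 2 * x))) =
      1 / (x + j) - 1 / (j + 1 - x) := by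
    have : (0 : ℝ) ≤ j := j.cast_nonneg
    have h₁ : 1 + (x + j) - 2 * x ≠ 0 := by linarith
    have h₂ : j + 1 - x ≠ 0 := by linarith
    field_simp
    ring
  simp only [Finset.mul_sum, hpartialFractions] at hsum
  have hlim := tendsto_nhds_unique hsum hcot
  rw [← mul_div_assoc, div_eq_iff hx₀.ne'] at hlim
  linear_combination hlim

lemma hypergeomSum_one_third : hypergeomSum 1 (1 / 3) 2 (7 / 6) = π * √3 / 4 := by
  have hcot : cot (π * (1 / 6)) = √3 := by
    rw [mul_one_div, cot_eq_cos_div_sin, cos_pi_div_six, sin_pi_div_six]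
    ring
  have hsum := one_sub_two_mul_hypergeomSum (x := 1 / 6) (by norm_num) (by norm_num)
  norm_num [hcot] at hsum ⊢
  linear_combination 3 / 2 * hsum

end Cotangent

lemma contiguousWeight_one_third (k : ℕ) :
    contiguousWeight 1 (1 / 3) 2 (7 / 6) k =
      (1 / 4 : ℝ) ^ k * (risingFactorial (5 / 6) k * risingFactorial (5 / 3) k) /
        (risingFactorial (17 / 12) k * risingFactorial (23 / 12) k) *
        ((12 * k + 5) * (12 * k + 11) / (55 * ((k + 1) * (6 * k + 1)))) := by
  have hweight : contiguousWeight 1 (1 / 3) 2 (7 / 6) k =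
      risingFactorial 1 k * risingFactorial (5 / 3) k *
          (risingFactorial (1 / 6) k * risingFactorial (5 / 6) k) /
        (risingFactorial 2 k * risingFactorial (7 / 6) k * risingFactorial (5 / 6) (2 * k)) := by
    rw [contiguousWeight_eq]
    norm_num
  have hdup : risingFactorial (5 / 6) (2 * k) =
      4 ^ k * risingFactorial (5 / 12) k * risingFactorial (11 / 12) k := by
    rw [risingFactorial_two_mul]
    norm_num
  have hshift {a b : ℝ} (ha : 0 < a) (hab : b = a + 1) :
      risingFactorial b k = risingFactorial a k * ((a + k) / a) :=
    hab ▸ risingFactorial_add_one ha.ne' k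
  have h₁ : 0 < risingFactorial 1 k := risingFactorial_pos (by norm_num) k
  have h₆ : 0 < risingFactorial (1 / 6) k := risingFactorial_pos (by norm_num) k
  have h₅ : 0 < risingFactorial (5 / 12) k := risingFactorial_pos (by norm_num) k
  have h₁₁ : 0 < risingFactorial (11 / 12) k := risingFactorial_pos (by norm_num) k
  rw [hweight, hdup, hshift (a := 1) (b := 2) (by norm_num) (by norm_num),
    hshift (a := 1 / 6) (b := 7 / 6) (by norm_num) (by norm_num),
    hshift (a := 5 / 12) (b := 17 / 12) (by norm_num) (by norm_num),
    hshift (a := 11 / 12) (b := 23 / 12) (by norm_num) (by norm_num), one_div_pow]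
  field_simp
  ring

lemma contiguousRemainder_one_third (k : ℕ) :
    contiguousRemainder 1 (1 / 3) (2 + k) (7 / 6 + k) =
      (108 * (k : ℝ) ^ 2 + 174 * k + 71) / ((12 * k + 5) * (12 * k + 11)) := by
  have hs : 2 + (k : ℝ) + (7 / 6 + k) - 1 - 1 / 3 = (12 * k + 11) / 6 := by ring
  have hs' : ((12 : ℝ) * k + 11) / 6 - 1 = (12 * k + 5) / 6 := by ring
  rw [contiguousRemainder, hs, hs']
  field_simp
  ring

theorem stmt_14 :
    165 * Real.pi / (4 * Real.sqrt 3) =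
      ∑' k : ℕ, (1/4 : ℝ) ^ k * (risingFactorial (5/6) k * risingFactorial (5/3) k) /
        (risingFactorial (17/12) k * risingFactorial (23/12) k) * ((108 * (k:ℝ)^2 + 174 * (k:ℝ) + 71) / (((k:ℝ) + 1) * (6 * (k:ℝ) + 1))) := by
  have hsum := (hasSum_contiguousWeight_mul_contiguousRemainder (a := 1) (b := 1 / 3) (c := 2)
    (d := 7 / 6) (by norm_num) (by norm_num) (by norm_num) (by norm_num) (by norm_num)).mul_left 55
  rw [hypergeomSum_one_third] at hsum
  have hvalue : 165 * Real.pi / (4 * √3) = 55 * (Real.pi * √3 / 4) := by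
    rw [div_eq_iff (by positivity)]
    linear_combination (-55 * Real.pi) * Real.sq_sqrt (show (0 : ℝ) ≤ 3 by norm_num)
  rw [hvalue, ← hsum.tsum_eq]
  refine tsum_congr fun k ↦ ?_
  rw [contiguousWeight_one_third, contiguousRemainder_one_third, mul_left_comm, mul_assoc]
  congr 1
  field_simp
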